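/- Let a > 1 and (k_n) an increasing sequence of positive integers with k_1 ≥ 2a and k_1 ≥ 5 and Σ 1/k_n < ∞. Then there exists a sequence of positive reals (d_n), n ≥ -1, with d_{-1} = 1, satisfying d_{2n} = k_{2n+2} d_{2n+1} + d_{2n+2} and d_{2n-1} = k_{2n+1} d_{2n} + d_{2n+1} + (a-1) δ_{2n}, where δ_{2n} = Σ_{s≥0} a^s d_{2n+4s+2} < ∞, and a real α > 1 such that 0 ≤ log(α d_n / Δ_n) < 2(a-1)/k_{n+2} for all n ≥ -1, where Δ_n = |q_n ρ - p_n| for ρ = [k_1, k_2, ...]. -/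

import Mathlib

open Filter

/-!
The errors `Δ n` satisfy `Δ n = k (n + 2) * Δ (n + 1) + Δ (n + 2)`, so they are a subsolution of the
recursion sought for `d`, in which a nonnegative tail is added. Since `Δ` decays quickly, the tail
contributes at most the factor `1 + (a - 1) / (k (n + 2) * k (n + 3))`, and because `k` increases by
at least `1` at each step, `(a - 1) / (x * y) ≤ (a - 1) / x - (a - 1) / y` makes
`exp ((a - 1) / k (n + 2)) * Δ n` a supersolution. The Knaster–Tarski theorem gives a solution
between the two, and dividing it by its value `α` at `-1` gives `d`.
-/

theorem exists_mem_Icc_apply_eq_of_monotoneOn {β : Type*} [ConditionallyCompleteLattice β]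
    {l u : β} (hlu : l ≤ u) {T : β → β} (hT : MonotoneOn T (Set.Icc l u))
    (hl : l ≤ T l) (hu : T u ≤ u) : ∃ x ∈ Set.Icc l u, T x = x := by
  have : Fact (l ≤ u) := ⟨hlu⟩
  have hmaps : ∀ x ∈ Set.Icc l u, T x ∈ Set.Icc l u := fun x hx =>
    ⟨hl.trans (hT ⟨le_rfl, hlu⟩ hx hx.1), (hT hx ⟨hlu, le_rfl⟩ hx.2).trans hu⟩
  let F : Set.Icc l u →o Set.Icc l u :=
    ⟨fun x => ⟨T x, hmaps x x.2⟩, fun x y hxy => hT x.2 y.2 hxy⟩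
  exact ⟨F.lfp, F.lfp.2, congrArg Subtype.val F.map_lfp⟩

theorem pow_mul_apply_add_mul_le {R : Type*} [CommSemiring R] [PartialOrder R] [IsOrderedRing R]
    {a r : R} (ha : 0 ≤ a) (hr : 0 ≤ r) {t : ℕ} {f : ℕ → R}
    (hf : ∀ m, a * f (m + t) ≤ r * f m) (s m : ℕ) : a ^ s * f (m + t * s) ≤ r ^ s * f m := by
  induction s generalizing m with
  | zero => simp
  | succ s ih =>
    calc a ^ (s + 1) * f (m + t * (s + 1)) = a * (a ^ s * f (m + t + t * s)) := by
          rw [show m + t * (s + 1) = m + t + t * s by ring, pow_succ']; ring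
      _ ≤ a * (r ^ s * f (m + t)) := mul_le_mul_of_nonneg_left (ih _) ha
      _ = r ^ s * (a * f (m + t)) := by ring
      _ ≤ r ^ s * (r * f m) := mul_le_mul_of_nonneg_left (hf m) (pow_nonneg hr s)
      _ = r ^ (s + 1) * f m := by ring

theorem exp_div_mul_one_add_le {b x y : ℝ} (hb : 0 ≤ b) (hx : 0 < x) (hxy : x + 1 ≤ y) :
    Real.exp (b / y) * (1 + b / (x * y)) ≤ Real.exp (b / x) := by
  have hy : 0 < y := by linarith
  have htelescope : b / (x * y) + b / y ≤ b / x :=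
    calc b / (x * y) + b / y = b * (x + 1) / (x * y) := by field_simp; ring
      _ ≤ b * y / (x * y) := by gcongr
      _ = b / x := by field_simp
  calc Real.exp (b / y) * (1 + b / (x * y))
      ≤ Real.exp (b / y) * Real.exp (b / (x * y)) := by
        gcongr
        linarith [Real.add_one_le_exp (b / (x * y))]
    _ = Real.exp (b / (x * y) + b / y) := by rw [Real.exp_add, mul_comm]
    _ ≤ Real.exp (b / x) := Real.exp_le_exp.2 htelescope

theorem log_div_mem_Icc {x y c : ℝ} (hx : 0 < x) (hxy : x ≤ y) (hyc : y ≤ Real.exp c * x) :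
    Real.log (y / x) ∈ Set.Icc 0 c :=
  ⟨Real.log_nonneg ((one_le_div hx).2 hxy),
    (Real.log_le_iff_le_exp (div_pos (hx.trans_le hxy) hx)).2 ((div_le_iff₀ hx).2 hyc)⟩

section Tail

/-- The tail `∑ aˢ f (m + 4s)`: for the sequence `f m = d (m - 1)`, the quantity `δ_{2n}` of the
theorem is `weightedTail a f (2 * n + 3)`. -/
noncomputable def weightedTail (a : ℝ) (f : ℕ → ℝ) (m : ℕ) : ℝ :=
  ∑' s : ℕ, a ^ s * f (m + 4 * s)

variable {a : ℝ} {f g U : ℕ → ℝ}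

theorem summable_weightedTail (ha : 0 ≤ a) (hU : ∀ m, a * U (m + 4) ≤ 1 / 2 * U m)
    (hf : 0 ≤ f) (hfU : f ≤ U) (m : ℕ) : Summable fun s : ℕ => a ^ s * f (m + 4 * s) :=
  .of_nonneg_of_le (fun s => mul_nonneg (pow_nonneg ha s) (hf _))
    (fun s => (mul_le_mul_of_nonneg_left (hfU _) (pow_nonneg ha s)).trans
      (pow_mul_apply_add_mul_le ha one_half_pos.le hU s m))
    (summable_geometric_two.mul_right (U m))

theorem weightedTail_le_two_mul (ha : 0 ≤ a) (hU : ∀ m, a * U (m + 4) ≤ 1 / 2 * U m)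
    (hU0 : 0 ≤ U) (m : ℕ) : weightedTail a U m ≤ 2 * U m :=
  hasSum_le (fun s => pow_mul_apply_add_mul_le ha one_half_pos.le hU s m)
    (summable_weightedTail ha hU hU0 le_rfl m).hasSum (hasSum_geometric_two.mul_right (U m))

theorem weightedTail_le_weightedTail (ha : 0 ≤ a) (hfg : f ≤ g) {m : ℕ}
    (hf : Summable fun s : ℕ => a ^ s * f (m + 4 * s))
    (hg : Summable fun s : ℕ => a ^ s * g (m + 4 * s)) :
    weightedTail a f m ≤ weightedTail a g m :=
  hf.tsum_le_tsum (fun s => mul_le_mul_of_nonneg_left (hfg _) (pow_nonneg ha s)) hg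

theorem weightedTail_nonneg (ha : 0 ≤ a) (hf : 0 ≤ f) (m : ℕ) : 0 ≤ weightedTail a f m :=
  tsum_nonneg fun s => mul_nonneg (pow_nonneg ha s) (hf _)

theorem weightedTail_pos (ha : 0 ≤ a) (hf : ∀ m, 0 < f m) {m : ℕ}
    (hsum : Summable fun s : ℕ => a ^ s * f (m + 4 * s)) : 0 < weightedTail a f m :=
  hsum.tsum_pos (fun s => mul_nonneg (pow_nonneg ha s) (hf _).le) 0 (by simpa using hf m)

theorem weightedTail_div (y : ℝ) (m : ℕ) :
    weightedTail a (fun i => f i / y) m = weightedTail a f m / y := by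
  simp only [weightedTail, ← mul_div_assoc, tsum_div_const]

end Tail

section Recursion

/-- The right-hand side of the recursion for `d`, as an operator on sequences indexed from `0`
instead of `-1`. The coefficient `c m` switches the tail on and off: the theorem has `c m = a - 1`
for even `m` and `c m = 0` for odd `m`. -/
noncomputable def tailRecursion (a : ℝ) (K c f : ℕ → ℝ) (m : ℕ) : ℝ :=
  K m * f (m + 1) + f (m + 2) + c m * weightedTail a f (m + 3)

/-- The supersolution of the recursion built from a solution `D` of the recursion without tail. -/
noncomputable def expBarrier (b : ℝ) (K D : ℕ → ℝ) (m : ℕ) : ℝ :=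
  Real.exp (b / K m) * D m

variable {a b : ℝ} {K c D U : ℕ → ℝ}

theorem antitone_of_mul_succ_le (hK : ∀ m, 1 ≤ K m) (hU : 0 ≤ U)
    (hKU : ∀ m, K m * U (m + 1) ≤ U m) : Antitone U :=
  antitone_nat_of_succ_le fun m => (le_mul_of_one_le_left (hU _) (hK m)).trans (hKU m)

theorem mul_apply_add_four_le (ha : 1 ≤ a) (hK : ∀ m, 2 * a ≤ K m) (hU : 0 ≤ U)
    (hKU : ∀ m, K m * U (m + 1) ≤ U m) (m : ℕ) : a * U (m + 4) ≤ 1 / 2 * U m := by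
  have hanti := antitone_of_mul_succ_le (fun m => by linarith [hK m]) hU hKU
  calc a * U (m + 4) ≤ a * U (m + 1) := by gcongr; exact hanti (by omega)
    _ = 1 / 2 * (2 * a * U (m + 1)) := by ring
    _ ≤ 1 / 2 * (K m * U (m + 1)) := by gcongr; exacts [hU _, hK m]
    _ ≤ 1 / 2 * U m := by gcongr; exact hKU m

theorem tailRecursion_div (y : ℝ) (m : ℕ) :
    tailRecursion a K c (fun i => f i / y) m = tailRecursion a K c f m / y := by
  simp only [tailRecursion, weightedTail_div]
  ring

theorem monotoneOn_tailRecursion (ha : 0 ≤ a) (hK : 0 ≤ K) (hc : 0 ≤ c) (hD : 0 ≤ D)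
    (hU : ∀ m, a * U (m + 4) ≤ 1 / 2 * U m) :
    MonotoneOn (tailRecursion a K c) (Set.Icc D U) := by
  intro f hf g hg hfg m
  have htail : weightedTail a f (m + 3) ≤ weightedTail a g (m + 3) :=
    weightedTail_le_weightedTail ha hfg (summable_weightedTail ha hU (hD.trans hf.1) hf.2 _)
      (summable_weightedTail ha hU (hD.trans hg.1) hg.2 _)
  exact add_le_add (add_le_add (mul_le_mul_of_nonneg_left (hfg _) (hK m)) (hfg _))
    (mul_le_mul_of_nonneg_left htail (hc m))

theorem le_tailRecursion (ha : 0 ≤ a) (hc : 0 ≤ c) (hD : 0 ≤ D)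
    (hrec : ∀ m, D m = K m * D (m + 1) + D (m + 2)) : D ≤ tailRecursion a K c D := fun m =>
  (hrec m).trans_le (le_add_of_nonneg_right (mul_nonneg (hc m) (weightedTail_nonneg ha hD _)))

theorem le_expBarrier (hb : 0 ≤ b) (hK : 0 ≤ K) (hD : 0 ≤ D) : D ≤ expBarrier b K D := fun m =>
  le_mul_of_one_le_left (hD m) (Real.one_le_exp (div_nonneg hb (hK m)))

theorem expBarrier_le_exp_mul (hb : 0 ≤ b) (hK : Monotone K) (hK0 : ∀ m, 0 < K m) (hD : 0 ≤ D)
    {i m : ℕ} (him : i ≤ m) : expBarrier b K D m ≤ Real.exp (b / K i) * D m :=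
  mul_le_mul_of_nonneg_right
    (Real.exp_le_exp.2 (div_le_div_of_nonneg_left hb (hK0 i) (hK him))) (hD m)

theorem mul_expBarrier_succ_le (hb : 0 ≤ b) (hK : Monotone K) (hK0 : ∀ m, 0 < K m) (hD : 0 ≤ D)
    (hKD : ∀ m, K m * D (m + 1) ≤ D m) (m : ℕ) :
    K m * expBarrier b K D (m + 1) ≤ expBarrier b K D m :=
  calc K m * expBarrier b K D (m + 1) ≤ K m * (Real.exp (b / K m) * D (m + 1)) :=
        mul_le_mul_of_nonneg_left (expBarrier_le_exp_mul hb hK hK0 hD m.le_succ) (hK0 m).le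
    _ = Real.exp (b / K m) * (K m * D (m + 1)) := by ring
    _ ≤ expBarrier b K D m := mul_le_mul_of_nonneg_left (hKD m) (Real.exp_nonneg _)

theorem weightedTail_expBarrier_le (ha : 1 ≤ a) (hb : 0 ≤ b) (hKa : ∀ m, 2 * a ≤ K m)
    (hK : Monotone K) (hD : 0 ≤ D) (hKD : ∀ m, K m * D (m + 1) ≤ D m) (m : ℕ) :
    weightedTail a (expBarrier b K D) (m + 3) ≤
      Real.exp (b / K (m + 1)) * (D m / (K m * K (m + 1))) := by
  have hK0 : ∀ m, 0 < K m := fun m => by linarith [hKa m]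
  have hKU := mul_expBarrier_succ_le hb hK hK0 hD hKD
  have hU0 : 0 ≤ expBarrier b K D := fun m => mul_nonneg (Real.exp_nonneg _) (hD m)
  have hD2 : D (m + 2) ≤ D m / (K m * K (m + 1)) := by
    rw [le_div_iff₀ (mul_pos (hK0 _) (hK0 _))]
    calc D (m + 2) * (K m * K (m + 1)) = K m * (K (m + 1) * D (m + 2)) := by ring
      _ ≤ K m * D (m + 1) := mul_le_mul_of_nonneg_left (hKD _) (hK0 m).le
      _ ≤ D m := hKD m
  calc weightedTail a (expBarrier b K D) (m + 3) ≤ 2 * expBarrier b K D (m + 3) :=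
        weightedTail_le_two_mul (by linarith) (mul_apply_add_four_le ha hKa hU0 hKU) hU0 _
    _ ≤ K (m + 2) * expBarrier b K D (m + 3) :=
        mul_le_mul_of_nonneg_right (by linarith [hKa (m + 2)]) (hU0 _)
    _ ≤ expBarrier b K D (m + 2) := hKU (m + 2)
    _ ≤ Real.exp (b / K (m + 1)) * D (m + 2) := expBarrier_le_exp_mul hb hK hK0 hD (by omega)
    _ ≤ Real.exp (b / K (m + 1)) * (D m / (K m * K (m + 1))) := by gcongr

theorem tailRecursion_expBarrier_le (ha : 1 ≤ a) (hKa : ∀ m, 2 * a ≤ K m)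
    (hK : ∀ m, K m + 1 ≤ K (m + 1)) (hc : ∀ m, c m ∈ Set.Icc 0 b) (hD : 0 ≤ D)
    (hrec : ∀ m, D m = K m * D (m + 1) + D (m + 2)) :
    tailRecursion a K c (expBarrier b K D) ≤ expBarrier b K D := by
  intro m
  have hb : 0 ≤ b := (hc 0).1.trans (hc 0).2
  have hK0 : ∀ m, 0 < K m := fun m => by linarith [hKa m]
  have hKmono : Monotone K := monotone_nat_of_le_succ fun m => by linarith [hK m]
  have hKD : ∀ m, K m * D (m + 1) ≤ D m := fun m => (hrec m).symm ▸ le_add_of_nonneg_right (hD _)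
  have htail := weightedTail_expBarrier_le ha hb hKa hKmono hD hKD m
  have htwo : expBarrier b K D (m + 2) ≤ Real.exp (b / K (m + 1)) * D (m + 2) :=
    expBarrier_le_exp_mul hb hKmono hK0 hD (by omega)
  have htail0 : 0 ≤ Real.exp (b / K (m + 1)) * (D m / (K m * K (m + 1))) :=
    mul_nonneg (Real.exp_nonneg _) (div_nonneg (hD m) (mul_pos (hK0 _) (hK0 _)).le)
  calc tailRecursion a K c (expBarrier b K D) m
      ≤ K m * (Real.exp (b / K (m + 1)) * D (m + 1)) + Real.exp (b / K (m + 1)) * D (m + 2) +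
          b * (Real.exp (b / K (m + 1)) * (D m / (K m * K (m + 1)))) :=
        add_le_add (add_le_add le_rfl htwo)
          ((mul_le_mul_of_nonneg_left htail (hc m).1).trans
            (mul_le_mul_of_nonneg_right (hc m).2 htail0))
    _ = Real.exp (b / K (m + 1)) *
          (K m * D (m + 1) + D (m + 2) + b * (D m / (K m * K (m + 1)))) := by ring
    _ = Real.exp (b / K (m + 1)) * (1 + b / (K m * K (m + 1))) * D m := by rw [← hrec m]; ring
    _ ≤ expBarrier b K D m :=
        mul_le_mul_of_nonneg_right (exp_div_mul_one_add_le hb (hK0 m) (hK m)) (hD m)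

theorem exists_mem_Icc_tailRecursion_eq (ha : 1 ≤ a) (hKa : 2 * a ≤ K 0)
    (hK : ∀ m, K m + 1 ≤ K (m + 1)) (hc : ∀ m, c m ∈ Set.Icc 0 b) (hD : 0 ≤ D)
    (hrec : ∀ m, D m = K m * D (m + 1) + D (m + 2)) :
    ∃ f ∈ Set.Icc D (expBarrier b K D),
      (∀ m, Summable fun s : ℕ => a ^ s * f (m + 4 * s)) ∧ tailRecursion a K c f = f := by
  have ha0 : 0 ≤ a := by linarith
  have hb : 0 ≤ b := (hc 0).1.trans (hc 0).2
  have hKmono : Monotone K := monotone_nat_of_le_succ fun m => by linarith [hK m]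
  have hKa' : ∀ m, 2 * a ≤ K m := fun m => hKa.trans (hKmono m.zero_le)
  have hK0 : ∀ m, 0 < K m := fun m => by linarith [hKa' m]
  have hKD : ∀ m, K m * D (m + 1) ≤ D m := fun m => (hrec m).symm ▸ le_add_of_nonneg_right (hD _)
  have hDU : D ≤ expBarrier b K D := le_expBarrier hb (fun m => (hK0 m).le) hD
  have hdecay : ∀ m, a * expBarrier b K D (m + 4) ≤ 1 / 2 * expBarrier b K D m :=
    mul_apply_add_four_le ha hKa' (hD.trans hDU) (mul_expBarrier_succ_le hb hKmono hK0 hD hKD)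
  obtain ⟨f, hf, hfix⟩ := exists_mem_Icc_apply_eq_of_monotoneOn hDU
    (monotoneOn_tailRecursion ha0 (fun m => (hK0 m).le) (fun m => (hc m).1) hD hdecay)
    (le_tailRecursion ha0 (fun m => (hc m).1) hD hrec)
    (tailRecursion_expBarrier_le ha hKa' hK hc hD hrec)
  exact ⟨f, hf, summable_weightedTail ha0 hdecay (hD.trans hf.1) hf.2, hfix⟩

theorem exists_normalized_tailRecursion_eq (ha : 1 ≤ a) (hKa : 2 * a ≤ K 0)
    (hK : ∀ m, K m + 1 ≤ K (m + 1)) (hc : ∀ m, c m ∈ Set.Icc 0 b) (hc0 : 0 < c 0)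
    (hD : ∀ m, 0 < D m) (hD0 : D 0 = 1) (hrec : ∀ m, D m = K m * D (m + 1) + D (m + 2)) :
    ∃ (f : ℕ → ℝ) (α : ℝ), 1 < α ∧ f 0 = 1 ∧ (∀ m, 0 < f m) ∧
      (∀ m, Summable fun s : ℕ => a ^ s * f (m + 4 * s)) ∧
      (∀ m, f m = tailRecursion a K c f m) ∧
      ∀ m, Real.log (α * f m / D m) ∈ Set.Icc 0 (b / K m) := by
  obtain ⟨g, ⟨hDg, hgU⟩, hsum, hfix⟩ :=
    exists_mem_Icc_tailRecursion_eq ha hKa hK hc (fun m => (hD m).le) hrec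
  have hg : ∀ m, 0 < g m := fun m => (hD m).trans_le (hDg m)
  have hα : 1 < g 0 := by
    have htail := mul_pos hc0 (weightedTail_pos (by linarith) hg (hsum 3))
    have hKg : K 0 * D 1 ≤ K 0 * g 1 := mul_le_mul_of_nonneg_left (hDg 1) (by linarith)
    calc 1 = K 0 * D 1 + D 2 := hD0 ▸ hrec 0
      _ < K 0 * g 1 + g 2 + c 0 * weightedTail a g 3 := by linarith [hDg 2]
      _ = g 0 := congrFun hfix 0
  refine ⟨fun m => g m / g 0, g 0, hα, div_self (hg 0).ne', fun m => div_pos (hg m) (hg 0),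
    fun m => ?_, fun m => ?_, fun m => ?_⟩
  · simpa only [mul_div_assoc] using (hsum m).div_const (g 0)
  · rw [tailRecursion_div, hfix]
  · rw [mul_div_cancel₀ _ (hg 0).ne']
    exact log_div_mem_Icc (hD m) (hDg m) (hgU m)

end Recursion

/-- `P` and `Q` are the numerators and denominators of the convergents of the continued fraction
`[K 0, K 1, ...] = 1 / (K 0 + 1 / (K 1 + ...))`. The index is shifted so that `P m = p_{m-1}`,
`Q m = q_{m-1}` and `K m = k_{m+1}`. -/
structure IsConvergentPair (K P Q : ℕ → ℝ) : Prop where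
  num_zero : P 0 = 1
  num_one : P 1 = 0
  den_zero : Q 0 = 0
  den_one : Q 1 = 1
  num_add_two : ∀ m, P (m + 2) = K m * P (m + 1) + P m
  den_add_two : ∀ m, Q (m + 2) = K m * Q (m + 1) + Q m

namespace IsConvergentPair

variable {K P Q : ℕ → ℝ} {ρ : ℝ}

theorem den_succ_pos (h : IsConvergentPair K P Q) (hK : ∀ m, 0 < K m) (m : ℕ) :
    0 < Q (m + 1) := by
  suffices 0 ≤ Q m ∧ 0 < Q (m + 1) from this.2
  induction m with
  | zero => simp [h.den_zero, h.den_one]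
  | succ m ih =>
    refine ⟨ih.2.le, ?_⟩
    rw [h.den_add_two]
    exact add_pos_of_pos_of_nonneg (mul_pos (hK m) ih.2) ih.1

theorem determinant (h : IsConvergentPair K P Q) (m : ℕ) :
    P m * Q (m + 1) - P (m + 1) * Q m = (-1) ^ m := by
  induction m with
  | zero => simp [h.num_zero, h.num_one, h.den_zero, h.den_one]
  | succ m ih =>
    rw [h.num_add_two, h.den_add_two, pow_succ, ← ih]
    ring

theorem div_sub_div_add_two (h : IsConvergentPair K P Q) {m : ℕ} (hm : Q m ≠ 0)
    (hm' : Q (m + 2) ≠ 0) :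
    P m / Q m - P (m + 2) / Q (m + 2) = (-1) ^ m * (K m / (Q m * Q (m + 2))) := by
  rw [div_sub_div _ _ hm hm', ← mul_div_assoc, ← h.determinant, h.num_add_two, h.den_add_two]
  ring

theorem strictAnti_neg_one_pow_mul_div (h : IsConvergentPair K P Q) (hK : ∀ m, 0 < K m) (m : ℕ) :
    StrictAnti fun i : ℕ =>
      (-1) ^ (m + 1) * (P (m + 1 + 2 * i) / Q (m + 1 + 2 * i)) := by
  refine strictAnti_nat_of_succ_lt fun i => ?_
  have hQ : ∀ j, 0 < Q (m + 1 + j) := fun j => by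
    simpa only [add_right_comm] using h.den_succ_pos hK (m + j)
  have hdiff := h.div_sub_div_add_two (hQ (2 * i)).ne' (hQ (2 * i + 2)).ne'
  have hsign : (-1 : ℝ) ^ (m + 1) * (-1) ^ (m + 1 + 2 * i) = 1 := by
    rw [pow_add _ (m + 1), pow_mul, neg_one_sq, one_pow, mul_one, ← mul_pow]
    simp
  have hpos := div_pos (hK (m + 1 + 2 * i)) (mul_pos (hQ (2 * i)) (hQ (2 * i + 2)))
  rw [← sub_pos, mul_add_one, ← add_assoc, ← mul_sub, hdiff, ← mul_assoc, hsign, one_mul]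
  exact hpos

theorem neg_one_pow_mul_sub_pos (h : IsConvergentPair K P Q) (hK : ∀ m, 0 < K m)
    (hρ : Tendsto (fun n => P (n + 1) / Q (n + 1)) atTop (nhds ρ)) (m : ℕ) :
    0 < (-1) ^ m * (P m - Q m * ρ) := by
  rcases m with _ | m
  · simp [h.num_zero, h.den_zero]
  have hanti := h.strictAnti_neg_one_pow_mul_div hK m
  have hlim : Tendsto (fun i : ℕ => (-1) ^ (m + 1) * (P (m + 1 + 2 * i) / Q (m + 1 + 2 * i)))
      atTop (nhds ((-1) ^ (m + 1) * ρ)) := by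
    have hindex : Tendsto (fun i : ℕ => m + 2 * i) atTop atTop :=
      tendsto_atTop_mono (fun i => by dsimp only [id]; omega) tendsto_id
    simpa only [Function.comp_def, add_right_comm] using
      (hρ.comp hindex).const_mul ((-1 : ℝ) ^ (m + 1))
  have hlt : (-1) ^ (m + 1) * ρ < (-1) ^ (m + 1) * (P (m + 1) / Q (m + 1)) :=
    (hanti.antitone.le_of_tendsto hlim 1).trans_lt (hanti Nat.zero_lt_one)
  have hQ := h.den_succ_pos hK m
  calc 0 < Q (m + 1) * ((-1) ^ (m + 1) * (P (m + 1) / Q (m + 1)) - (-1) ^ (m + 1) * ρ) :=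
        mul_pos hQ (sub_pos.2 hlt)
    _ = (-1) ^ (m + 1) * (P (m + 1) - Q (m + 1) * ρ) := by field_simp

theorem abs_sub_eq (h : IsConvergentPair K P Q) (hK : ∀ m, 0 < K m)
    (hρ : Tendsto (fun n => P (n + 1) / Q (n + 1)) atTop (nhds ρ)) (m : ℕ) :
    |Q m * ρ - P m| = (-1) ^ m * (P m - Q m * ρ) := by
  rw [← abs_of_pos (h.neg_one_pow_mul_sub_pos hK hρ m), abs_mul, abs_neg_one_pow, one_mul,
    abs_sub_comm]

theorem abs_sub_pos (h : IsConvergentPair K P Q) (hK : ∀ m, 0 < K m)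
    (hρ : Tendsto (fun n => P (n + 1) / Q (n + 1)) atTop (nhds ρ)) (m : ℕ) :
    0 < |Q m * ρ - P m| :=
  (h.neg_one_pow_mul_sub_pos hK hρ m).trans_eq (h.abs_sub_eq hK hρ m).symm

theorem abs_sub_eq_mul_add (h : IsConvergentPair K P Q) (hK : ∀ m, 0 < K m)
    (hρ : Tendsto (fun n => P (n + 1) / Q (n + 1)) atTop (nhds ρ)) (m : ℕ) :
    |Q m * ρ - P m| = K m * |Q (m + 1) * ρ - P (m + 1)| + |Q (m + 2) * ρ - P (m + 2)| := by
  rw [h.abs_sub_eq hK hρ, h.abs_sub_eq hK hρ, h.abs_sub_eq hK hρ, h.num_add_two, h.den_add_two]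
  ring

theorem of_int {k p q : ℤ → ℝ} (hp0 : p 0 = 0) (hq0 : q 0 = 1) (hpm : p (-1) = 1)
    (hqm : q (-1) = 0) (hp : ∀ n : ℤ, 1 ≤ n → p n = k n * p (n - 1) + p (n - 2))
    (hq : ∀ n : ℤ, 1 ≤ n → q n = k n * q (n - 1) + q (n - 2)) :
    IsConvergentPair (fun m => k (m + 1)) (fun m => p (m - 1)) (fun m => q (m - 1)) where
  num_zero := by simpa using hpm
  num_one := by simpa using hp0
  den_zero := by simpa using hqm
  den_one := by simpa using hq0
  num_add_two m := by convert hp (m + 1) (by omega) using 3 <;> grind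
  den_add_two m := by convert hq (m + 1) (by omega) using 3 <;> grind

end IsConvergentPair

theorem stmt4_general (a : ℝ) (ha : 1 < a) (k : ℤ → ℝ)
    (hkmono : ∀ n : ℤ, 1 ≤ n → k n + 1 ≤ k (n + 1)) (hk2a : 2 * a ≤ k 1) (p q : ℤ → ℝ)
    (hp0 : p 0 = 0) (hq0 : q 0 = 1) (hpm : p (-1) = 1) (hqm : q (-1) = 0)
    (hp : ∀ n : ℤ, 1 ≤ n → p n = k n * p (n - 1) + p (n - 2))
    (hq : ∀ n : ℤ, 1 ≤ n → q n = k n * q (n - 1) + q (n - 2))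
    (ρ : ℝ) (hρ : Tendsto (fun n : ℕ => p n / q n) atTop (nhds ρ)) :
    ∃ d : ℤ → ℝ, ∃ α : ℝ,
      1 < α ∧ d (-1) = 1 ∧ (∀ n : ℤ, -1 ≤ n → 0 < d n) ∧
      (∀ n : ℤ, 0 ≤ n → Even n → Summable (fun s : ℕ => a ^ s * d (n + 4 * s + 2))) ∧
      (∀ n : ℤ, 0 ≤ n → Even n → d n = k (n + 2) * d (n + 1) + d (n + 2)) ∧
      (∀ n : ℤ, -1 ≤ n → Odd n →
        d n = k (n + 2) * d (n + 1) + d (n + 2) +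
          (a - 1) * ∑' s : ℕ, a ^ s * d ((n + 1) + 4 * s + 2)) ∧
      (∀ n : ℤ, -1 ≤ n →
        0 ≤ Real.log (α * d n / |q n * ρ - p n|) ∧
        Real.log (α * d n / |q n * ρ - p n|) < 2 * (a - 1) / k (n + 2)) := by
  have hK : ∀ m : ℕ, k (m + 1) + 1 ≤ k ((m + 1 : ℕ) + 1) := fun m => by
    exact_mod_cast hkmono (m + 1) (by omega)
  have hK0 : ∀ m : ℕ, 0 < k (m + 1) := fun m => by
    have hmono : Monotone fun m : ℕ => k (m + 1) :=
      monotone_nat_of_le_succ fun m => by linarith [hK m]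
    have hk1 : k 1 ≤ k (m + 1) := by simpa using hmono m.zero_le
    linarith
  have hPQ := IsConvergentPair.of_int hp0 hq0 hpm hqm hp hq
  have hlim : Tendsto (fun n : ℕ => p ((n + 1 : ℕ) - 1) / q ((n + 1 : ℕ) - 1)) atTop (nhds ρ) := by
    simpa using hρ
  obtain ⟨f, α, hα, hf0, hf, hsum, hrec, hlog⟩ :=
    exists_normalized_tailRecursion_eq (c := fun m => if Even m then a - 1 else 0) (b := a - 1)
      ha.le (by simpa using hk2a) hK (fun m => by split_ifs <;> simp [ha.le]) (by simpa using ha)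
      (hPQ.abs_sub_pos hK0 hlim) (by simp [hpm, hqm]) (hPQ.abs_sub_eq_mul_add hK0 hlim)
  let d : ℤ → ℝ := fun n => f (n + 1).toNat
  have hd : ∀ {n : ℤ} (m : ℕ), n + 1 = m → d n = f m := fun m h => congrArg f (by omega)
  refine ⟨d, α, hα, hf0, fun n _ => hf _, fun n hn _ => ?_, fun n hn he => ?_, fun n hn ho => ?_,
    fun n hn => ?_⟩
  · lift n to ℕ using hn
    convert hsum (n + 3) using 3 with s
    exact hd _ (by push_cast; ring)
  · lift n to ℕ using hn
    rw [hd (n + 1) rfl, hd (n + 2) (by push_cast; ring), hd (n + 3) (by push_cast; ring),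
      hrec (n + 1), tailRecursion, if_neg (by grind), zero_mul, add_zero]
    push_cast
    ring_nf
  · obtain ⟨m, rfl⟩ : ∃ m : ℕ, n = m - 1 := ⟨(n + 1).toNat, by omega⟩
    have htail : ∀ s : ℕ, d ((m : ℤ) - 1 + 1 + 4 * s + 2) = f (m + 3 + 4 * s) := fun s =>
      hd _ (by push_cast; ring)
    simp only [htail]
    rw [hd m (by ring), hd (m + 1) (by push_cast; ring), hd (m + 2) (by push_cast; ring),
      hrec m, tailRecursion, if_pos (by grind), weightedTail]
    ring_nf
  · obtain ⟨m, rfl⟩ : ∃ m : ℕ, n = m - 1 := ⟨(n + 1).toNat, by omega⟩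
    rw [hd m (by ring), show (m : ℤ) - 1 + 2 = m + 1 by ring]
    refine ⟨(hlog m).1, (hlog m).2.trans_lt ?_⟩
    exact div_lt_div_of_pos_right (by linarith) (hK0 m)

theorem stmt4
    (a : ℝ) (ha : 1 < a)
    (k : ℤ → ℤ) (hkpos : ∀ n : ℤ, 1 ≤ n → 1 ≤ k n)
    (hkmono : ∀ n : ℤ, 1 ≤ n → k n < k (n + 1))
    (hk2a : 2 * a ≤ (k 1 : ℝ)) (hk5 : 5 ≤ k 1)
    (hksum : Summable (fun n : ℕ => 1 / (k (n + 1) : ℝ)))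
    (p q : ℤ → ℤ)
    (hp0 : p 0 = 0) (hq0 : q 0 = 1) (hpm : p (-1) = 1) (hqm : q (-1) = 0)
    (hp : ∀ n : ℤ, 1 ≤ n → p n = k n * p (n - 1) + p (n - 2))
    (hq : ∀ n : ℤ, 1 ≤ n → q n = k n * q (n - 1) + q (n - 2))
    (ρ : ℝ)
    (hρ : Tendsto (fun n : ℕ => (p n : ℝ) / (q n : ℝ)) atTop (nhds ρ)) :
    ∃ d : ℤ → ℝ, ∃ α : ℝ,
      1 < α ∧ d (-1) = 1 ∧ (∀ n : ℤ, -1 ≤ n → 0 < d n) ∧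
      (∀ n : ℤ, 0 ≤ n → Even n →
        Summable (fun s : ℕ => a ^ s * d (n + 4 * s + 2))) ∧
      (∀ n : ℤ, 0 ≤ n → Even n →
        d n = (k (n + 2) : ℝ) * d (n + 1) + d (n + 2)) ∧
      (∀ n : ℤ, -1 ≤ n → Odd n →
        d n = (k (n + 2) : ℝ) * d (n + 1) + d (n + 2) +
          (a - 1) * ∑' s : ℕ, a ^ s * d ((n + 1) + 4 * s + 2)) ∧
      (∀ n : ℤ, -1 ≤ n →
        0 ≤ Real.log (α * d n / |(q n : ℝ) * ρ - (p n : ℝ)|) ∧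
        Real.log (α * d n / |(q n : ℝ) * ρ - (p n : ℝ)|) <
          2 * (a - 1) / (k (n + 2) : ℝ)) :=
  stmt4_general a ha (k ·) (fun n hn => mod_cast hkmono n hn) hk2a (p ·) (q ·) (mod_cast hp0)
    (mod_cast hq0) (mod_cast hpm) (mod_cast hqm) (mod_cast hp) (mod_cast hq) ρ hρ
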